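/- Let (R, m) be a Noetherian local ring and M a finitely generated R-module of Krull dimension t ≥ 2. If there exists a parameter ideal Q of M such that f⁰_Q(M) = ℓ_R(M/QM) (i.e., the polynomial of degree t−1 agreeing with ℓ_R((Q^{n+1}M :_M m)/Q^{n+1}M) for n ≫ 0 has leading coefficient equal to ℓ_R(M/QM)/(t−1)!), then M is an Ulrich R-module; in fact M is Cohen–Macaulay and m M = Q M. -/

import Mathlib

open IsLocalRing Submodule

/-- The colon submodule `(N :_M J) = {x ∈ M ∣ J x ⊆ N}`. -/
def Submodule.colonBy {R M : Type*} [CommRing R] [AddCommGroup M] [Module R M]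
    (N : Submodule R M) (J : Ideal R) : Submodule R M where
  carrier := {x | ∀ r ∈ J, r • x ∈ N}
  add_mem' := fun {a b} ha hb r hr => by
    rw [smul_add]; exact N.add_mem (ha r hr) (hb r hr)
  zero_mem' := fun r hr => by rw [smul_zero]; exact N.zero_mem
  smul_mem' := fun c {x} hx r hr => by
    rw [smul_comm]; exact N.smul_mem c (hx r hr)

/-- The length of a module: the height of `⊤` in its lattice of submodules. -/
noncomputable def moduleLength (R M : Type*) [Ring R] [AddCommGroup M] [Module R M] : ℕ∞ :=
  Order.height (⊤ : Submodule R M)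

/-- The minimal number of generators of a module. -/
noncomputable def muGen (R M : Type*) [Ring R] [AddCommGroup M] [Module R M] : ℕ :=
  sInf {n | ∃ s : Finset M, s.card = n ∧ Submodule.span R (s : Set M) = ⊤}

/-- The depth of a module over a local ring: the supremum of lengths of `M`-regular
sequences consisting of elements of the maximal ideal. -/
noncomputable def depthM (R M : Type*) [CommRing R] [IsLocalRing R]
    [AddCommGroup M] [Module R M] : ℕ :=
  sSup {n | ∃ rs : List R, rs.length = n ∧ (∀ r ∈ rs, r ∈ maximalIdeal R) ∧
    RingTheory.Sequence.IsRegular M rs}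

/-- `Q` is a parameter ideal of `M` (of dimension `t`): it is generated by `t` elements of
the maximal ideal and `M/QM` has finite length. -/
def IsParameterIdeal (R M : Type*) [CommRing R] [IsLocalRing R]
    [AddCommGroup M] [Module R M] (t : ℕ) (Q : Ideal R) : Prop :=
  Q ≤ maximalIdeal R ∧ ∃ s : Finset R, s.card = t ∧ Q = Ideal.span (s : Set R) ∧
    moduleLength R (M ⧸ (Q • ⊤ : Submodule R M)) ≠ ⊤

/-!
Let `Q = (x₁, …, xₜ)` and `l = ℓ(M/QM)`. Ordering the monomials of degree `n` lexicographically
filters `QⁿM/Qⁿ⁺¹M` with factors `M/L_α`, one for each monomial `x^α`, where `QM ≤ L_α` and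
`L_β ≤ L_α` if `x^β` divides `x^α`. Hence the socle of `M/Qⁿ⁺¹M`, intersected with
`QⁿM/Qⁿ⁺¹M`, has length at most `l` times the number of monomials of degree `n`. If `𝔪M ≰ QM`, the
socle misses part of every factor; if `L_β ≠ QM` for some `β`, every `α` above `β` contributes at
most `l - 1`. In both cases the loss grows like `nᵗ⁻¹/(t-1)!`. By Artin–Rees the part of the socle
outside `QⁿM/Qⁿ⁺¹M` has bounded length, which is negligible as `t ≥ 2`; so the leading coefficient
`l/(t-1)!` forces `𝔪M = QM` and `L_α = QM` for all `α`. The latter makes `x` quasi-regular, hence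
regular on `M`, and shows that `ℓ(M/Qⁿ⁺¹M)` is `l` times the binomial coefficient of `n + t` over
`t`.
-/

section RelativeLength

variable {R M : Type*} [Ring R] [AddCommGroup M] [Module R M] {X Y Z : Submodule R M}

/-- The length of `(Y + X) / X`, i.e. of the image of `Y` in `M ⧸ X`. When `X ≤ Y` it is the
length of `Y / X`. -/
noncomputable def relLength (Y X : Submodule R M) : ℕ∞ :=
  Module.length R (Y.map X.mkQ)

lemma relLength_mono (X : Submodule R M) (h : Y ≤ Z) : relLength Y X ≤ relLength Z X :=
  Module.length_le_of_injective (inclusion (map_mono h)) (inclusion_injective _)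

lemma relLength_top (X : Submodule R M) : relLength ⊤ X = Module.length R (M ⧸ X) := by
  rw [relLength, Submodule.map_top, range_mkQ, Module.length_top]

lemma relLength_eq_zero_iff : relLength Y X = 0 ↔ Y ≤ X := by
  rw [relLength, Module.length_eq_zero_iff, subsingleton_iff_eq_bot, ← LinearMap.le_ker_iff_map,
    ker_mkQ]

lemma relLength_sup_left (Y X : Submodule R M) : relLength (X ⊔ Y) X = relLength Y X := by
  rw [relLength, Submodule.map_sup, mkQ_map_self, bot_sup_eq, relLength]

lemma length_eq_length_inf_ker_add_length_map {N : Type*} [AddCommGroup N] [Module R N]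
    (g : M →ₗ[R] N) (Y : Submodule R M) :
    Module.length R Y = Module.length R ↥(Y ⊓ LinearMap.ker g) + Module.length R (Y.map g) := by
  refine Module.length_eq_add_of_exact (inclusion inf_le_left) (g.submoduleMap Y)
    (inclusion_injective _) (g.submoduleMap_surjective Y) ?_
  rw [LinearMap.exact_iff, range_inclusion]
  ext y
  simp [Subtype.ext_iff]

lemma relLength_eq_add (h : X ≤ Y) (Z : Submodule R M) :
    relLength Z X = relLength (Z ⊓ Y) X + relLength Z Y := by
  have hker : (LinearMap.ker (factor h)).comap X.mkQ = Y := by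
    rw [← LinearMap.ker_comp, factor_comp_mk, ker_mkQ]
  rw [relLength, length_eq_length_inf_ker_add_length_map (factor h), map_inf_eq_map_inf_comap,
    hker, ← Submodule.map_comp, factor_comp_mk, relLength, relLength]

lemma relLength_anti (h : X ≤ Y) (Z : Submodule R M) : relLength Z Y ≤ relLength Z X :=
  (relLength_eq_add h Z).symm ▸ le_add_self

lemma relLength_inf_right (Z X : Submodule R M) : relLength Z (Z ⊓ X) = relLength Z X := by
  rw [relLength_eq_add inf_le_right, relLength_eq_zero_iff.2 le_rfl, zero_add]

lemma le_of_relLength_le (h : X ≤ Y) (hfin : relLength Z Y ≠ ⊤)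
    (hle : relLength Z X ≤ relLength Z Y) : Z ⊓ Y ≤ X := by
  rw [relLength_eq_add h] at hle
  exact relLength_eq_zero_iff.1 (by simpa using ENat.le_sub_of_add_le_right hfin hle)

lemma le_sup_of_relLength_le (h : Y ≤ Z) (hfin : relLength Y X ≠ ⊤)
    (hle : relLength Z X ≤ relLength Y X) : Z ≤ X ⊔ Y := by
  have hmono : relLength Y X ≤ relLength (Z ⊓ (X ⊔ Y)) X :=
    relLength_mono X (le_inf h le_sup_right)
  rw [relLength_eq_add (le_sup_left : X ≤ X ⊔ Y) Z] at hle
  have hzero : relLength Z (X ⊔ Y) ≤ 0 := by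
    simpa using ENat.le_sub_of_add_le_left hfin ((add_le_add_left hmono _).trans hle)
  exact relLength_eq_zero_iff.1 (nonpos_iff_eq_zero.1 hzero)

lemma relLength_inf_sup_biSup_eq_sum {ι κ : Type*} [LinearOrder κ] {f : ι → κ}
    (hf : Function.Injective f) (N : ι → Submodule R M) (T A : Submodule R M) (D : Finset ι) :
    relLength (A ⊓ (T ⊔ ⨆ c ∈ D, N c)) T =
      ∑ b ∈ D, relLength (A ⊓ ((T ⊔ ⨆ c ∈ D, ⨆ _ : f c < f b, N c) ⊔ N b))
        (T ⊔ ⨆ c ∈ D, ⨆ _ : f c < f b, N c) := by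
  classical
  induction D using Finset.induction_on_max_value f with
  | empty => simp [relLength_eq_zero_iff]
  | insert b S hbS hmax ih =>
    have hlt : ∀ c ∈ S, f c < f b := fun c hc ↦
      (hmax c hc).lt_of_ne fun e ↦ hbS (hf e ▸ hc)
    have hbelow_max : ⨆ c ∈ insert b S, ⨆ _ : f c < f b, N c = ⨆ c ∈ S, N c := by
      rw [Finset.iSup_insert, iSup_neg (lt_irrefl _), bot_sup_eq]
      exact iSup_congr fun c ↦ iSup_congr fun hc ↦ iSup_pos (hlt c hc)
    have hbelow : ∀ d ∈ S,
        ⨆ c ∈ insert b S, ⨆ _ : f c < f d, N c = ⨆ c ∈ S, ⨆ _ : f c < f d, N c := fun d hd ↦ by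
      rw [Finset.iSup_insert, iSup_neg (hlt d hd).asymm, bot_sup_eq]
    have hsup : T ⊔ ⨆ c ∈ insert b S, N c = (T ⊔ ⨆ c ∈ S, N c) ⊔ N b := by
      rw [Finset.iSup_insert, sup_assoc, sup_comm (N b)]
    rw [Finset.sum_insert hbS, hbelow_max, hsup,
      relLength_eq_add (le_sup_left : T ≤ T ⊔ ⨆ c ∈ S, N c), inf_assoc,
      inf_of_le_right (le_sup_left : _ ≤ _ ⊔ N b), ih, add_comm]
    congr 1
    exact Finset.sum_congr rfl fun d hd ↦ by rw [hbelow d hd]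

end RelativeLength

section Pointwise

open Pointwise

variable {R M : Type*} [CommRing R] [AddCommGroup M] [Module R M]

lemma relLength_sup_smul_top (G : Submodule R M) (a : R) :
    relLength (G ⊔ a • ⊤) G = Module.length R (M ⧸ G.comap (LinearMap.lsmul R M a)) := by
  have e := (G.mkQ.comp (LinearMap.lsmul R M a)).quotKerEquivRange
  rw [LinearMap.ker_comp, LinearMap.range_comp, ker_mkQ, LinearMap.range_eq_map] at e
  rw [relLength_sup_left, e.length_eq]
  rfl

end Pointwise

section Monomials

open Pointwise
open Finset.Nat (antidiagonalTuple mem_antidiagonalTuple)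

variable {R M : Type*} [CommRing R] [AddCommGroup M] [Module R M] {t n : ℕ}

lemma pow_succ_smul_top_le (I : Ideal R) (n : ℕ) :
    I ^ (n + 1) • (⊤ : Submodule R M) ≤ I ^ n • ⊤ :=
  smul_mono_left (Ideal.pow_le_pow_right n.le_succ)

/-- The monomial `x₁ ^ α₁ ⋯ xₜ ^ αₜ`. -/
def monomialAt (x : Fin t → R) (α : Fin t → ℕ) : R :=
  ∏ i, x i ^ α i

/-- The ideal generated by the entries of a sequence. -/
def seqIdeal (x : Fin t → R) : Ideal R :=
  Ideal.span (Set.range x)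

lemma mem_seqIdeal (x : Fin t → R) (i : Fin t) : x i ∈ seqIdeal x :=
  Ideal.subset_span (Set.mem_range_self i)

lemma monomialAt_zero (x : Fin t → R) : monomialAt x 0 = 1 := by
  simp [monomialAt]

lemma monomialAt_add (x : Fin t → R) (α β : Fin t → ℕ) :
    monomialAt x (α + β) = monomialAt x α * monomialAt x β := by
  simp [monomialAt, pow_add, Finset.prod_mul_distrib]

lemma monomialAt_single_one (x : Fin t → R) (i : Fin t) : monomialAt x (Pi.single i 1) = x i := by
  simp [monomialAt, Pi.single_apply, pow_ite]

lemma monomialAt_mem_pow (x : Fin t → R) {α : Fin t → ℕ} (hα : α ∈ antidiagonalTuple t n) :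
    monomialAt x α ∈ seqIdeal x ^ n := by
  rw [← mem_antidiagonalTuple.1 hα, ← Finset.prod_pow_eq_pow_sum]
  exact Ideal.prod_mem_prod fun i _ ↦ Ideal.pow_mem_pow (mem_seqIdeal x i) _

lemma monomialAt_smul_mem_pow_succ (x : Fin t → R) {α : Fin t → ℕ}
    (hα : α ∈ antidiagonalTuple t n) {y : M} (hy : y ∈ seqIdeal x • (⊤ : Submodule R M)) :
    monomialAt x α • y ∈ seqIdeal x ^ (n + 1) • (⊤ : Submodule R M) := by
  rw [pow_succ, Submodule.mul_smul]
  exact smul_mem_smul (monomialAt_mem_pow x hα) hy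

lemma add_mem_antidiagonalTuple {d : ℕ} {α β : Fin t → ℕ} (hα : α ∈ antidiagonalTuple t d)
    (hβ : β ∈ antidiagonalTuple t n) : α + β ∈ antidiagonalTuple t (d + n) := by
  rw [mem_antidiagonalTuple] at *
  simp [Finset.sum_add_distrib, hα, hβ]

lemma single_one_mem_antidiagonalTuple (i : Fin t) : Pi.single i 1 ∈ antidiagonalTuple t 1 := by
  simp [mem_antidiagonalTuple]

lemma card_antidiagonalTuple (t n : ℕ) : (antidiagonalTuple t n).card = t.multichoose n := by
  rw [← Finset.piAntidiag_univ_fin_eq_antidiagonalTuple]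
  simpa [Finset.finsuppAntidiag] using
    Finset.card_finsuppAntidiag_nat_eq_multichoose (s := (Finset.univ : Finset (Fin t))) n

lemma seqIdeal_pow_smul_top (x : Fin t → R) (n : ℕ) :
    seqIdeal x ^ n • (⊤ : Submodule R M) =
      ⨆ α ∈ antidiagonalTuple t n, monomialAt x α • (⊤ : Submodule R M) := by
  apply le_antisymm
  · induction n with
    | zero => simp [Finset.Nat.antidiagonalTuple_zero_right, monomialAt_zero]
    | succ n ih =>
      rw [pow_succ', Submodule.mul_smul, seqIdeal, Submodule.span_smul_eq]
      refine set_smul_le _ _ _ ?_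
      rintro _ y ⟨i, rfl⟩ hy
      suffices hle : ⨆ α ∈ antidiagonalTuple t n, monomialAt x α • ⊤ ≤
          comap (LinearMap.lsmul R M (x i)) (⨆ α ∈ antidiagonalTuple t (n + 1), monomialAt x α • ⊤)
        from hle (ih hy)
      refine iSup₂_le fun α hα ↦ ?_
      rintro _ ⟨v, -, rfl⟩
      have hmem := add_mem_antidiagonalTuple hα (single_one_mem_antidiagonalTuple i)
      have hmul : x i • monomialAt x α • v = monomialAt x (α + Pi.single i 1) • v := by
        rw [monomialAt_add, monomialAt_single_one, mul_comm, mul_smul]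
      rw [mem_comap, LinearMap.lsmul_apply, DistribSMul.toLinearMap_apply, hmul]
      exact le_biSup (fun β ↦ monomialAt x β • (⊤ : Submodule R M)) hmem
        (smul_mem_pointwise_smul v _ ⊤ mem_top)
  · refine iSup₂_le fun α hα ↦ ?_
    rintro _ ⟨v, -, rfl⟩
    exact smul_mem_smul (monomialAt_mem_pow x hα) mem_top

lemma mem_seqIdeal_pow_smul_top (x : Fin t → R) {y : M} :
    y ∈ seqIdeal x ^ n • (⊤ : Submodule R M) ↔
      ∃ c : (Fin t → ℕ) → M, ∑ α ∈ antidiagonalTuple t n, monomialAt x α • c α = y := by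
  rw [seqIdeal_pow_smul_top, mem_iSup_finset_iff_exists_sum]
  constructor
  · rintro ⟨v, rfl⟩
    choose c _ hc using fun α ↦ (mem_smul_pointwise_iff_exists _ _ _).1 (v α).2
    exact ⟨c, by simp only [hc]⟩
  · rintro ⟨c, rfl⟩
    exact ⟨fun α ↦ ⟨_, smul_mem_pointwise_smul (c α) (monomialAt x α) ⊤ mem_top⟩, rfl⟩

end Monomials

section LeadingColon

open Pointwise
open Finset.Nat (antidiagonalTuple mem_antidiagonalTuple)

variable {R M : Type*} [CommRing R] [AddCommGroup M] [Module R M] {t n : ℕ}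

/-- With `Q = seqIdeal x`, the submodule `Q ^ (|α| + 1) M + ∑ x ^ β M`, where `β` runs over the
exponents of degree `|α|` that are lexicographically smaller than `α`. These submodules refine
the filtration `Q ^ n M`. -/
def lexLowerSpan (x : Fin t → R) (M : Type*) [AddCommGroup M] [Module R M] (α : Fin t → ℕ) :
    Submodule R M :=
  seqIdeal x ^ (∑ i, α i + 1) • ⊤ ⊔
    ⨆ β ∈ antidiagonalTuple t (∑ i, α i), ⨆ _ : toLex β < toLex α, monomialAt x β • ⊤

/-- The submodule of all `y` such that `x ^ α y` is congruent to a combination of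
lexicographically smaller monomials modulo `Q ^ (|α| + 1) M`, where `Q = seqIdeal x`. -/
def leadingColon (x : Fin t → R) (M : Type*) [AddCommGroup M] [Module R M] (α : Fin t → ℕ) :
    Submodule R M :=
  (lexLowerSpan x M α).comap (LinearMap.lsmul R M (monomialAt x α))

lemma mem_leadingColon {x : Fin t → R} {α : Fin t → ℕ} {y : M} :
    y ∈ leadingColon x M α ↔ monomialAt x α • y ∈ lexLowerSpan x M α :=
  Iff.rfl

lemma seqIdeal_smul_top_le_leadingColon (x : Fin t → R) (α : Fin t → ℕ) :
    seqIdeal x • ⊤ ≤ leadingColon x M α := fun _ hy ↦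
  mem_leadingColon.2 <|
    mem_sup_left <| monomialAt_smul_mem_pow_succ x (mem_antidiagonalTuple.2 rfl) hy

lemma monomialAt_smul_mem_lexLowerSpan (x : Fin t → R) {α β : Fin t → ℕ}
    (hβ : β ∈ antidiagonalTuple t (∑ i, α i)) (hlt : toLex β < toLex α) (v : M) :
    monomialAt x β • v ∈ lexLowerSpan x M α :=
  mem_sup_right <| mem_iSup_of_mem β <| mem_iSup_of_mem hβ <| mem_iSup_of_mem hlt <|
    smul_mem_pointwise_smul v _ ⊤ mem_top

lemma monomialAt_smul_mem_lexLowerSpan_add (x : Fin t → R) {α γ : Fin t → ℕ} {y : M}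
    (hy : y ∈ lexLowerSpan x M α) : monomialAt x γ • y ∈ lexLowerSpan x M (γ + α) := by
  suffices hle : lexLowerSpan x M α ≤
      (lexLowerSpan x M (γ + α)).comap (LinearMap.lsmul R M (monomialAt x γ)) from hle hy
  have hγ : γ ∈ antidiagonalTuple t (∑ i, γ i) := mem_antidiagonalTuple.2 rfl
  have hdeg : ∑ i, (γ + α) i = ∑ i, γ i + ∑ i, α i := Finset.sum_add_distrib
  refine sup_le (fun z hz ↦ mem_sup_left ?_) (iSup₂_le fun β hβ ↦ iSup_le fun hlt ↦ ?_)
  · rw [hdeg, add_assoc, pow_add, Submodule.mul_smul]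
    exact smul_mem_smul (monomialAt_mem_pow x hγ) hz
  · rintro _ ⟨v, -, rfl⟩
    rw [mem_comap, LinearMap.lsmul_apply, DistribSMul.toLinearMap_apply, ← mul_smul,
      ← monomialAt_add]
    exact monomialAt_smul_mem_lexLowerSpan x (hdeg ▸ add_mem_antidiagonalTuple hγ hβ)
      (add_lt_add_right hlt (toLex γ)) v

lemma leadingColon_le_leadingColon_add (x : Fin t → R) (α γ : Fin t → ℕ) :
    leadingColon x M α ≤ leadingColon x M (γ + α) := fun y hy ↦ by
  rw [mem_leadingColon, monomialAt_add, mul_smul]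
  exact monomialAt_smul_mem_lexLowerSpan_add x (mem_leadingColon.1 hy)

lemma relLength_inf_seqIdeal_pow_smul_top (x : Fin t → R) (A : Submodule R M) (n : ℕ) :
    relLength (A ⊓ seqIdeal x ^ n • ⊤) (seqIdeal x ^ (n + 1) • ⊤) =
      ∑ α ∈ antidiagonalTuple t n,
        relLength (A ⊓ (lexLowerSpan x M α ⊔ monomialAt x α • ⊤)) (lexLowerSpan x M α) := by
  have hsup : seqIdeal x ^ n • (⊤ : Submodule R M) = seqIdeal x ^ (n + 1) • ⊤ ⊔
      ⨆ α ∈ antidiagonalTuple t n, monomialAt x α • ⊤ := by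
    rw [← seqIdeal_pow_smul_top, sup_of_le_right (pow_succ_smul_top_le _ n)]
  rw [hsup, relLength_inf_sup_biSup_eq_sum toLex.injective]
  refine Finset.sum_congr rfl fun α hα ↦ ?_
  rw [lexLowerSpan, mem_antidiagonalTuple.1 hα]
  rfl

lemma relLength_sup_monomialAt_smul_top (x : Fin t → R) (α : Fin t → ℕ) :
    relLength (lexLowerSpan x M α ⊔ monomialAt x α • ⊤) (lexLowerSpan x M α) =
      Module.length R (M ⧸ leadingColon x M α) :=
  relLength_sup_smul_top _ _

lemma relLength_seqIdeal_pow_smul_top (x : Fin t → R) (n : ℕ) :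
    relLength (seqIdeal x ^ n • ⊤) (seqIdeal x ^ (n + 1) • (⊤ : Submodule R M)) =
      ∑ α ∈ antidiagonalTuple t n, Module.length R (M ⧸ leadingColon x M α) := by
  simpa only [top_inf_eq, relLength_sup_monomialAt_smul_top] using
    relLength_inf_seqIdeal_pow_smul_top x (⊤ : Submodule R M) n

lemma relLength_inf_sup_monomialAt_smul_top_le (x : Fin t → R) (A : Submodule R M)
    (α : Fin t → ℕ) :
    relLength (A ⊓ (lexLowerSpan x M α ⊔ monomialAt x α • ⊤)) (lexLowerSpan x M α) ≤
      Module.length R (M ⧸ leadingColon x M α) :=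
  (relLength_mono _ inf_le_right).trans_eq (relLength_sup_monomialAt_smul_top x α)

lemma length_quotient_leadingColon_le (x : Fin t → R) (α : Fin t → ℕ) :
    Module.length R (M ⧸ leadingColon x M α) ≤
      Module.length R (M ⧸ seqIdeal x • (⊤ : Submodule R M)) := by
  rw [← relLength_top, ← relLength_top]
  exact relLength_anti (seqIdeal_smul_top_le_leadingColon x α) ⊤

lemma relLength_inf_seqIdeal_pow_smul_top_add_card_le (x : Fin t → R) (A : Submodule R M)
    {S : Finset (Fin t → ℕ)} (hS : S ⊆ antidiagonalTuple t n)
    (hlt : ∀ α ∈ S,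
      relLength (A ⊓ (lexLowerSpan x M α ⊔ monomialAt x α • ⊤)) (lexLowerSpan x M α) <
        Module.length R (M ⧸ seqIdeal x • (⊤ : Submodule R M))) :
    relLength (A ⊓ seqIdeal x ^ n • ⊤) (seqIdeal x ^ (n + 1) • ⊤) + S.card ≤
      (antidiagonalTuple t n).card * Module.length R (M ⧸ seqIdeal x • (⊤ : Submodule R M)) := by
  classical
  have hcard : (S.card : ℕ∞) = ∑ α ∈ antidiagonalTuple t n, if α ∈ S then 1 else 0 := by
    rw [Finset.sum_boole, Finset.filter_mem_eq_inter, Finset.inter_eq_right.2 hS]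
  rw [relLength_inf_seqIdeal_pow_smul_top, hcard, ← Finset.sum_add_distrib, ← nsmul_eq_mul]
  refine Finset.sum_le_card_nsmul _ _ _ fun α _ ↦ ?_
  split_ifs with hα
  · exact Order.add_one_le_of_lt (hlt α hα)
  · rw [add_zero]
    exact (relLength_inf_sup_monomialAt_smul_top_le x A α).trans
      (length_quotient_leadingColon_le x α)

lemma relLength_top_seqIdeal_pow_ne_top (x : Fin t → R)
    (hfin : Module.length R (M ⧸ seqIdeal x • (⊤ : Submodule R M)) ≠ ⊤) (n : ℕ) :
    relLength ⊤ (seqIdeal x ^ n • (⊤ : Submodule R M)) ≠ ⊤ := by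
  induction n with
  | zero => simp [relLength_eq_zero_iff.2]
  | succ n ih =>
    have hle := relLength_inf_seqIdeal_pow_smul_top_add_card_le x (⊤ : Submodule R M)
      (n := n) (Finset.empty_subset _) (by simp)
    rw [relLength_eq_add (pow_succ_smul_top_le _ n)]
    have hbound := le_of_add_le_left hle
    have hquot := ne_top_of_le_ne_top (WithTop.mul_ne_top (ENat.natCast_ne_top _) hfin) hbound
    exact WithTop.add_ne_top.2 ⟨hquot, ih⟩

lemma leadingColon_le_of_length_le {x : Fin t → R}
    (hfin : Module.length R (M ⧸ seqIdeal x • (⊤ : Submodule R M)) ≠ ⊤) {α : Fin t → ℕ}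
    (hle : Module.length R (M ⧸ seqIdeal x • (⊤ : Submodule R M)) ≤
      Module.length R (M ⧸ leadingColon x M α)) :
    leadingColon x M α ≤ seqIdeal x • ⊤ := by
  have hfin' := ne_top_of_le_ne_top hfin (length_quotient_leadingColon_le x α)
  rw [← relLength_top] at hfin'
  rw [← relLength_top, ← relLength_top] at hle
  simpa using le_of_relLength_le (seqIdeal_smul_top_le_leadingColon x α) hfin' hle

lemma smul_top_le_of_length_le_relLength_inf {x : Fin t → R} {I : Ideal R} {A : Submodule R M}
    (hfin : Module.length R (M ⧸ seqIdeal x • (⊤ : Submodule R M)) ≠ ⊤) {α : Fin t → ℕ}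
    (hA : A ≤ (lexLowerSpan x M α).colonBy I)
    (hle : Module.length R (M ⧸ seqIdeal x • (⊤ : Submodule R M)) ≤
      relLength (A ⊓ (lexLowerSpan x M α ⊔ monomialAt x α • ⊤)) (lexLowerSpan x M α)) :
    I • (⊤ : Submodule R M) ≤ seqIdeal x • ⊤ := by
  have hcolon : leadingColon x M α ≤ seqIdeal x • ⊤ :=
    leadingColon_le_of_length_le hfin
      (hle.trans (relLength_inf_sup_monomialAt_smul_top_le x A α))
  have hlength : relLength (lexLowerSpan x M α ⊔ monomialAt x α • ⊤) (lexLowerSpan x M α) ≤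
      Module.length R (M ⧸ seqIdeal x • (⊤ : Submodule R M)) :=
    (relLength_sup_monomialAt_smul_top x α).trans_le (length_quotient_leadingColon_le x α)
  have hsup := le_sup_of_relLength_le inf_le_right
    (ne_top_of_le_ne_top hfin ((relLength_mono _ inf_le_right).trans hlength))
    (hlength.trans hle)
  refine Submodule.smul_le.2 fun r hr v _ ↦ hcolon (mem_leadingColon.2 ?_)
  obtain ⟨g, hg, y, hy, hgy⟩ := Submodule.mem_sup.1 <| hsup <| mem_sup_right <|
    smul_mem_pointwise_smul v (monomialAt x α) ⊤ mem_top
  rw [smul_comm, ← hgy, smul_add]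
  exact add_mem (smul_mem _ r hg) (hA hy.1 r hr)

lemma smul_top_le_of_card_mul_lt {x : Fin t → R} {I : Ideal R} {A : Submodule R M}
    (hfin : Module.length R (M ⧸ seqIdeal x • (⊤ : Submodule R M)) ≠ ⊤)
    (hA : A ≤ (seqIdeal x ^ (n + 1) • ⊤ : Submodule R M).colonBy I)
    (hlt : (antidiagonalTuple t n).card * Module.length R (M ⧸ seqIdeal x • (⊤ : Submodule R M)) <
      relLength (A ⊓ seqIdeal x ^ n • ⊤) (seqIdeal x ^ (n + 1) • ⊤) +
        (antidiagonalTuple t n).card) :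
    I • (⊤ : Submodule R M) ≤ seqIdeal x • ⊤ := by
  by_contra hI
  refine hlt.not_ge (relLength_inf_seqIdeal_pow_smul_top_add_card_le x A subset_rfl ?_)
  refine fun α hα ↦ lt_of_not_ge fun hle ↦ hI ?_
  refine smul_top_le_of_length_le_relLength_inf hfin (fun y hy r hr ↦ mem_sup_left ?_) hle
  rw [mem_antidiagonalTuple.1 hα]
  exact hA hy r hr

lemma leadingColon_le_of_card_mul_lt {x : Fin t → R} {A : Submodule R M}
    (hfin : Module.length R (M ⧸ seqIdeal x • (⊤ : Submodule R M)) ≠ ⊤) {d : ℕ}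
    {β : Fin t → ℕ} (hβ : β ∈ antidiagonalTuple t d)
    (hlt : (antidiagonalTuple t (n + d)).card *
        Module.length R (M ⧸ seqIdeal x • (⊤ : Submodule R M)) <
      relLength (A ⊓ seqIdeal x ^ (n + d) • ⊤) (seqIdeal x ^ (n + d + 1) • ⊤) +
        (antidiagonalTuple t n).card) :
    leadingColon x M β ≤ seqIdeal x • ⊤ := by
  classical
  by_contra hne
  have hcard := Finset.card_image_of_injective (antidiagonalTuple t n) (add_left_injective β)
  rw [← hcard] at hlt
  refine hlt.not_ge (relLength_inf_seqIdeal_pow_smul_top_add_card_le x A ?_ ?_)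
  · exact Finset.image_subset_iff.2 fun γ hγ ↦ add_mem_antidiagonalTuple hγ hβ
  · refine Finset.forall_mem_image.2 fun γ _ ↦ lt_of_not_ge fun hle ↦ hne ?_
    exact (leadingColon_le_leadingColon_add x β γ).trans <| leadingColon_le_of_length_le hfin <|
      hle.trans (relLength_inf_sup_monomialAt_smul_top_le x A _)

end LeadingColon

section QuasiRegular

open Pointwise
open Finset.Nat (antidiagonalTuple mem_antidiagonalTuple)

variable {R M : Type*} [CommRing R] [AddCommGroup M] [Module R M] {t n : ℕ}

/-- A sequence `x` is `M`-quasi-regular if, with `Q = seqIdeal x`, every homogeneous form of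
degree `n` with coefficients in `M` whose value at `x` lies in `Q ^ (n + 1) M` has all its
coefficients in `Q M`. Unlike in some conventions, `Q M ≠ M` is not required. -/
def IsQuasiRegular (x : Fin t → R) (M : Type*) [AddCommGroup M] [Module R M] : Prop :=
  ∀ (n : ℕ) (c : (Fin t → ℕ) → M),
    ∑ α ∈ antidiagonalTuple t n, monomialAt x α • c α ∈ seqIdeal x ^ (n + 1) • (⊤ : Submodule R M) →
      ∀ α ∈ antidiagonalTuple t n, c α ∈ seqIdeal x • (⊤ : Submodule R M)

lemma isQuasiRegular_of_leadingColon_le {x : Fin t → R}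
    (h : ∀ α, leadingColon x M α ≤ seqIdeal x • ⊤) : IsQuasiRegular x M := by
  classical
  intro n c hsum
  by_contra! hbad
  obtain ⟨α₀, hα₀⟩ := hbad
  obtain ⟨α, hα, hmax⟩ := ((antidiagonalTuple t n).filter
    (c · ∉ seqIdeal x • (⊤ : Submodule R M))).exists_max_image toLex
      ⟨α₀, Finset.mem_filter.2 hα₀⟩
  rw [Finset.mem_filter] at hα
  refine hα.2 (h α (mem_leadingColon.2 ?_))
  have hdeg := mem_antidiagonalTuple.1 hα.1
  have hpow : seqIdeal x ^ (n + 1) • ⊤ ≤ lexLowerSpan x M α := by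
    rw [lexLowerSpan, hdeg]
    exact le_sup_left
  rw [← Finset.add_sum_erase _ _ hα.1] at hsum
  refine (add_mem_cancel_right (sum_mem fun β hβ ↦ ?_)).1 (hpow hsum)
  rw [Finset.mem_erase] at hβ
  by_cases hc : c β ∈ seqIdeal x • (⊤ : Submodule R M)
  · exact hpow (monomialAt_smul_mem_pow_succ x hβ.2 hc)
  · have hle := hmax β (Finset.mem_filter.2 ⟨hβ.2, hc⟩)
    exact monomialAt_smul_mem_lexLowerSpan x (hdeg ▸ hβ.2)
      (hle.lt_of_ne (toLex.injective.ne hβ.1)) (c β)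

lemma sum_antidiagonalTuple_succ_succ {A : Type*} [AddCommMonoid A] (t n : ℕ)
    (F : (Fin (t + 1) → ℕ) → A) :
    ∑ β ∈ antidiagonalTuple (t + 1) (n + 1), F β =
      ∑ α ∈ antidiagonalTuple t (n + 1), F (Fin.cons 0 α) +
        ∑ α ∈ antidiagonalTuple (t + 1) n, F (α + Pi.single 0 1) := by
  have hsub (β : Fin (t + 1) → ℕ) (hβ : β 0 ≠ 0) : β - Pi.single 0 1 + Pi.single 0 1 = β :=
    tsub_add_cancel_of_le <| by
      simpa [Pi.le_def, Fin.forall_fin_succ] using Nat.one_le_iff_ne_zero.2 hβ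
  rw [← Finset.sum_filter_add_sum_filter_not _ (fun β ↦ β 0 = 0)]
  congr 1
  · refine Finset.sum_nbij' Fin.tail (fun α ↦ Fin.cons 0 α) ?_ ?_ ?_ ?_ ?_ <;>
      simp only [Finset.mem_filter, mem_antidiagonalTuple, Fin.sum_univ_succ]
    · rintro β ⟨hβ, h0⟩
      simpa [h0, Fin.tail] using hβ
    · simp
    · rintro β ⟨-, h0⟩
      rw [← h0, Fin.cons_self_tail]
    · simp
    · rintro β ⟨-, h0⟩
      rw [← h0, Fin.cons_self_tail]
  · refine Finset.sum_nbij' (· - Pi.single 0 1) (· + Pi.single 0 1) ?_ ?_ ?_ ?_ ?_ <;>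
      simp only [Finset.mem_filter, mem_antidiagonalTuple]
    · rintro β ⟨hβ, h0⟩
      rw [← hsub β h0] at hβ
      simpa [Finset.sum_add_distrib] using hβ
    · rintro α hα
      simp [Finset.sum_add_distrib, hα]
    · exact fun β hβ ↦ hsub β hβ.2
    · simp
    · exact fun β hβ ↦ by rw [hsub β hβ.2]

lemma monomialAt_cons_zero (x : Fin (t + 1) → R) (α : Fin t → ℕ) :
    monomialAt x (Fin.cons 0 α) = monomialAt (Fin.tail x) α := by
  simp [monomialAt, Fin.prod_univ_succ, Fin.tail]

lemma exists_coeff_sum_eq_tail_add_head_smul (x : Fin (t + 1) → R) (n : ℕ)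
    (d : (Fin t → ℕ) → M) (g : (Fin (t + 1) → ℕ) → M) :
    ∃ c : (Fin (t + 1) → ℕ) → M,
      (∀ α, c (Fin.cons 0 α) = d α) ∧ (∀ α, c (α + Pi.single 0 1) = g α) ∧
      ∑ β ∈ antidiagonalTuple (t + 1) (n + 1), monomialAt x β • c β =
        ∑ α ∈ antidiagonalTuple t (n + 1), monomialAt (Fin.tail x) α • d α +
          x 0 • ∑ α ∈ antidiagonalTuple (t + 1) n, monomialAt x α • g α := by
  refine ⟨fun β ↦ if β 0 = 0 then d (Fin.tail β) else g (β - Pi.single 0 1),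
    by simp, by simp, ?_⟩
  rw [sum_antidiagonalTuple_succ_succ, Finset.smul_sum]
  simp [monomialAt_cons_zero, monomialAt_add, monomialAt_single_one, mul_comm _ (x 0), mul_smul]

lemma IsQuasiRegular.mem_of_head_smul_mem {x : Fin (t + 1) → R} (h : IsQuasiRegular x M) {y : M}
    (hy : x 0 • y ∈ seqIdeal x ^ (n + 1) • (⊤ : Submodule R M)) :
    y ∈ seqIdeal x ^ n • (⊤ : Submodule R M) := by
  induction n with
  | zero => simp
  | succ n ih =>
    obtain ⟨g, hg⟩ := (mem_seqIdeal_pow_smul_top x).1 (ih (pow_succ_smul_top_le _ _ hy))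
    obtain ⟨c, -, hcg, hsum⟩ := exists_coeff_sum_eq_tail_add_head_smul x n (fun _ ↦ 0) g
    rw [hg] at hsum
    have hc := h (n + 1) c (by simpa [hsum] using hy)
    rw [← hg]
    refine sum_mem fun α hα ↦ monomialAt_smul_mem_pow_succ x hα ?_
    rw [← hcg α]
    exact hc _ (add_mem_antidiagonalTuple hα (single_one_mem_antidiagonalTuple 0))

lemma seqIdeal_tail_le (x : Fin (t + 1) → R) : seqIdeal (Fin.tail x) ≤ seqIdeal x :=
  Ideal.span_mono (Set.range_comp_subset_range Fin.succ x)

lemma seqIdeal_smul_top_eq_sup (x : Fin (t + 1) → R) :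
    seqIdeal x • (⊤ : Submodule R M) = x 0 • ⊤ ⊔ seqIdeal (Fin.tail x) • ⊤ := by
  have hspan : seqIdeal x = Ideal.span {x 0} ⊔ seqIdeal (Fin.tail x) := by
    rw [seqIdeal, seqIdeal, ← Ideal.span_union, Fin.range_fin_succ, Set.insert_eq]
  rw [hspan, Submodule.sup_smul, ideal_span_singleton_smul]

lemma mkQ_mem_smul_top_iff (I : Ideal R) (N : Submodule R M) {y : M} :
    N.mkQ y ∈ I • (⊤ : Submodule R (M ⧸ N)) ↔ y ∈ N ⊔ I • ⊤ := by
  rw [← comap_map_mkQ, mem_comap, map_smul'', Submodule.map_top, range_mkQ]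

lemma IsQuasiRegular.tail {x : Fin (t + 1) → R} (h : IsQuasiRegular x M) :
    IsQuasiRegular (Fin.tail x) (QuotSMulTop (x 0) M) := by
  intro n c hc α hα
  choose d hd using fun α ↦ (x 0 • (⊤ : Submodule R M)).mkQ_surjective (c α)
  obtain rfl : (fun α ↦ (x 0 • (⊤ : Submodule R M)).mkQ (d α)) = c := funext hd
  simp only [← map_smul, ← map_sum] at hc
  rw [mkQ_mem_smul_top_iff] at hc
  rw [mkQ_mem_smul_top_iff, ← seqIdeal_smul_top_eq_sup]
  cases n with
  | zero =>
    rw [Finset.Nat.antidiagonalTuple_zero_right, Finset.mem_singleton] at hα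
    rw [zero_add, pow_one, ← seqIdeal_smul_top_eq_sup] at hc
    simpa [Finset.Nat.antidiagonalTuple_zero_right, monomialAt_zero, hα] using hc
  | succ n =>
    obtain ⟨_, ⟨y, -, rfl⟩, z, hz, hyz⟩ := Submodule.mem_sup.1 hc
    have htail (k : ℕ) : seqIdeal (Fin.tail x) ^ k • (⊤ : Submodule R M) ≤ seqIdeal x ^ k • ⊤ :=
      smul_mono_left (Ideal.pow_right_mono (seqIdeal_tail_le x) k)
    have hxy : x 0 • y ∈ seqIdeal x ^ (n + 1) • (⊤ : Submodule R M) := by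
      rw [← add_mem_cancel_right (pow_succ_smul_top_le _ _ (htail _ hz))]
      exact hyz ▸ htail _ ((mem_seqIdeal_pow_smul_top _).2 ⟨d, rfl⟩)
    obtain ⟨g, hg⟩ := (mem_seqIdeal_pow_smul_top x).1 (h.mem_of_head_smul_mem hxy)
    obtain ⟨c', hcd, -, hsum⟩ := exists_coeff_sum_eq_tail_add_head_smul x n d (-g)
    have hc'z : ∑ β ∈ antidiagonalTuple (t + 1) (n + 1), monomialAt x β • c' β = z := by
      simp [hsum, ← hyz, hg]
    rw [← hcd α]
    refine h (n + 1) c' (hc'z ▸ htail _ hz) _ ?_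
    simpa [mem_antidiagonalTuple, Fin.sum_univ_succ] using hα

lemma IsQuasiRegular.isWeaklyRegular [IsNoetherianRing R] [IsLocalRing R] [Module.Finite R M]
    {x : Fin t → R} (hx : seqIdeal x ≤ maximalIdeal R) (h : IsQuasiRegular x M) :
    RingTheory.Sequence.IsWeaklyRegular M (List.ofFn x) := by
  induction t generalizing M with
  | zero => simp
  | succ t ih =>
    rw [List.ofFn_succ]
    refine .cons ?_ (ih ((seqIdeal_tail_le x).trans hx) h.tail)
    rw [isSMulRegular_iff_right_eq_zero_of_smul]
    intro y hy
    have hne : seqIdeal x ≠ ⊤ := (hx.trans_lt (maximalIdeal.isMaximal R).ne_top.lt_top).ne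
    rw [← mem_bot R, ← Ideal.iInf_pow_smul_eq_bot_of_isLocalRing _ hne, mem_iInf]
    exact fun n ↦ h.mem_of_head_smul_mem (hy ▸ zero_mem _)

end QuasiRegular

section Colon

variable {R M : Type*} [CommRing R] [AddCommGroup M] [Module R M] {t : ℕ}

lemma smul_colonBy_le (I : Ideal R) (N : Submodule R M) : I • N.colonBy I ≤ N :=
  Submodule.smul_le.2 fun r hr _ hy ↦ hy r hr

lemma colonBy_anti {I J : Ideal R} (h : I ≤ J) (N : Submodule R M) : N.colonBy J ≤ N.colonBy I :=
  fun _ hy r hr ↦ hy r (h hr)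

/-- The map `M → Mᵗ`, `y ↦ (x₁ y, …, xₜ y)`. The preimage of `Nᵗ` under it is the colon submodule
`(N :_M seqIdeal x)`, which makes colons accessible to the Artin–Rees lemma. -/
def seqSMul (x : Fin t → R) (M : Type*) [AddCommGroup M] [Module R M] : M →ₗ[R] Fin t → M :=
  LinearMap.pi fun i ↦ LinearMap.lsmul R M (x i)

lemma comap_seqSMul_pi (x : Fin t → R) (N : Submodule R M) :
    comap (seqSMul x M) (Submodule.pi Set.univ fun _ ↦ N) = N.colonBy (seqIdeal x) := by
  apply le_antisymm
  · intro y hy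
    have hle : seqIdeal x ≤ comap (LinearMap.toSpanSingleton R M y) N :=
      Ideal.span_le.2 (Set.range_subset_iff.2 fun i ↦ hy i trivial)
    exact fun r hr ↦ hle hr
  · exact fun y hy i _ ↦ hy (x i) (mem_seqIdeal x i)

lemma smul_top_eq_pi {ι : Type*} [Finite ι] (I : Ideal R) :
    I • (⊤ : Submodule R (ι → M)) = Submodule.pi Set.univ fun _ ↦ I • (⊤ : Submodule R M) := by
  classical
  have := Fintype.ofFinite ι
  apply le_antisymm
  · exact Submodule.smul_le.2 fun r hr v _ i _ ↦ smul_mem_smul hr mem_top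
  · intro f hf
    rw [← Finset.univ_sum_single f]
    refine sum_mem fun i _ ↦ ?_
    have hi := mem_map_of_mem (f := LinearMap.single R (fun _ ↦ M) i) (hf i trivial)
    rw [map_smul''] at hi
    exact smul_mono le_rfl le_top hi

lemma comap_seqSMul_smul_top (x : Fin t → R) (I : Ideal R) :
    comap (seqSMul x M) (I • ⊤) = (I • ⊤ : Submodule R M).colonBy (seqIdeal x) := by
  rw [smul_top_eq_pi, comap_seqSMul_pi]

lemma ker_seqSMul (x : Fin t → R) :
    LinearMap.ker (seqSMul x M) = (⊥ : Submodule R M).colonBy (seqIdeal x) := by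
  rw [← comap_seqSMul_pi, pi_univ_bot, LinearMap.ker]

variable [IsNoetherianRing R] [Module.Finite R M]

lemma exists_colonBy_pow_succ_le (x : Fin t → R) :
    ∃ k, ∀ n ≥ k, (seqIdeal x ^ (n + 1) • ⊤ : Submodule R M).colonBy (seqIdeal x) ≤
      seqIdeal x ^ n • ⊤ ⊔ (⊥ : Submodule R M).colonBy (seqIdeal x) := by
  set Q := seqIdeal x
  obtain ⟨k, hk⟩ := Q.exists_pow_inf_eq_pow_smul (LinearMap.range (seqSMul x M))
  refine ⟨k, fun n hn ↦ ?_⟩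
  have hpow : Q ^ (n + 1 - k) • (Q ^ k • ⊤ : Submodule R M).colonBy Q ≤ Q ^ n • ⊤ := by
    rw [Nat.sub_add_comm hn, pow_succ, Submodule.mul_smul]
    refine (smul_mono_right _ (smul_colonBy_le Q _)).trans_eq ?_
    rw [← Submodule.mul_smul, ← pow_add, Nat.sub_add_cancel hn]
  have hcomap : (Q ^ (n + 1) • ⊤ : Submodule R M).colonBy Q =
      Q ^ (n + 1 - k) • (Q ^ k • ⊤ : Submodule R M).colonBy Q ⊔ (⊥ : Submodule R M).colonBy Q := by
    rw [← ker_seqSMul, ← comap_map_eq, map_smul'', ← comap_seqSMul_smul_top,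
      ← comap_seqSMul_smul_top, map_comap_eq, inf_comm, ← hk (n + 1) (hn.trans n.le_succ),
      comap_inf, LinearMap.range_eq_map, comap_map_eq, top_sup_eq, inf_top_eq]
  exact hcomap.trans_le (sup_le_sup_right hpow _)

lemma exists_inf_pow_smul_top_eq_bot (I : Ideal R) :
    ∃ n, (⊥ : Submodule R M).colonBy I ⊓ I ^ n • ⊤ = ⊥ := by
  obtain ⟨k, hk⟩ := I.exists_pow_inf_eq_pow_smul ((⊥ : Submodule R M).colonBy I)
  refine ⟨k + 1, ?_⟩
  rw [inf_comm, hk (k + 1) k.le_succ, Nat.add_sub_cancel_left, pow_one, eq_bot_iff]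
  exact (smul_mono_right I inf_le_right).trans (smul_colonBy_le I ⊥)

lemma relLength_bot_colonBy_ne_top {x : Fin t → R}
    (hfin : Module.length R (M ⧸ seqIdeal x • (⊤ : Submodule R M)) ≠ ⊤) :
    relLength ((⊥ : Submodule R M).colonBy (seqIdeal x)) ⊥ ≠ ⊤ := by
  obtain ⟨n, hn⟩ := exists_inf_pow_smul_top_eq_bot (M := M) (seqIdeal x)
  have hlength := relLength_inf_right ((⊥ : Submodule R M).colonBy (seqIdeal x))
    (seqIdeal x ^ n • ⊤)
  rw [hn] at hlength
  rw [hlength]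
  exact ne_top_of_le_ne_top (relLength_top_seqIdeal_pow_ne_top x hfin n) (relLength_mono _ le_top)

lemma exists_relLength_le_relLength_inf_pow_add {x : Fin t → R}
    (hfin : Module.length R (M ⧸ seqIdeal x • (⊤ : Submodule R M)) ≠ ⊤) :
    ∃ k c : ℕ, ∀ n ≥ k, ∀ A ≤ (seqIdeal x ^ (n + 1) • ⊤ : Submodule R M).colonBy (seqIdeal x),
      relLength A (seqIdeal x ^ (n + 1) • ⊤) ≤
        relLength (A ⊓ seqIdeal x ^ n • ⊤) (seqIdeal x ^ (n + 1) • ⊤) + c := by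
  obtain ⟨k, hk⟩ := exists_colonBy_pow_succ_le (M := M) x
  obtain ⟨c, hc⟩ := ENat.ne_top_iff_exists.1 (relLength_bot_colonBy_ne_top hfin)
  refine ⟨k, c, fun n hn A hA ↦ ?_⟩
  rw [relLength_eq_add (pow_succ_smul_top_le _ n)]
  gcongr
  calc relLength A (seqIdeal x ^ n • ⊤)
      ≤ relLength (seqIdeal x ^ n • ⊤ ⊔ (⊥ : Submodule R M).colonBy (seqIdeal x))
          (seqIdeal x ^ n • ⊤) := relLength_mono _ (hA.trans (hk n hn))
    _ = relLength ((⊥ : Submodule R M).colonBy (seqIdeal x)) (seqIdeal x ^ n • ⊤) :=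
      relLength_sup_left _ _
    _ ≤ relLength ((⊥ : Submodule R M).colonBy (seqIdeal x)) ⊥ := relLength_anti bot_le _
    _ = c := hc.symm

end Colon

section HilbertPolynomials

open Filter Polynomial
open scoped Nat

lemma eval_preHilbertPoly_add (F : Type*) [Field F] [CharZero F] (s d n : ℕ) :
    (preHilbertPoly F s d).eval ((n + d : ℕ) : F) = (s + 1).multichoose n := by
  rw [preHilbertPoly_eq_choose_sub_add F s (Nat.le_add_left d n), Nat.add_sub_cancel,
    Nat.multichoose_eq, Nat.choose_symm_of_eq_add (by lia : s + 1 + n - 1 = n + s), add_comm,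
    Nat.add_right_comm, Nat.add_sub_cancel]

lemma eventually_multichoose_mul_add_lt {s : ℕ} (hs : s ≠ 0) {G : ℚ[X]} (hdeg : G.natDegree ≤ s)
    {l : ℕ} (hlead : (s ! : ℚ) * G.coeff s = l) (c d : ℕ) :
    ∀ᶠ n : ℕ in atTop, ((s + 1).multichoose (n + d) * l + c : ℚ) <
      G.eval ((n + d : ℕ) : ℚ) + (s + 1).multichoose n := by
  set H : ℚ[X] :=
    G + preHilbertPoly ℚ s d - C (l : ℚ) * preHilbertPoly ℚ s 0 - C (c : ℚ) with hH
  have hcoeff : H.coeff s = (s ! : ℚ)⁻¹ := by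
    have hG : G.coeff s = l * (s ! : ℚ)⁻¹ := by rw [← hlead]; field_simp
    simp [hH, coeff_preHilbertPoly_self, hs, hG]
  have hpos : 0 < H.coeff s := hcoeff ▸ by positivity
  have hHdeg : H.natDegree = s := by
    refine natDegree_eq_of_le_of_coeff_ne_zero ?_ hpos.ne'
    rw [hH]
    compute_degree
    simp [hdeg, natDegree_preHilbertPoly]
  have htendsto := H.tendsto_atTop_of_leadingCoeff_nonneg
    (natDegree_pos_iff_degree_pos.1 (hHdeg ▸ hs.pos)) (by rw [leadingCoeff, hHdeg]; exact hpos.le)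
  have hshift := htendsto.comp
    (tendsto_natCast_atTop_atTop.comp (tendsto_add_atTop_nat d))
  filter_upwards [hshift.eventually_gt_atTop 0] with n hn
  have hzero := eval_preHilbertPoly_add ℚ s 0 (n + d)
  rw [add_zero] at hzero
  simp only [Function.comp_apply, hH, eval_sub, eval_add, eval_mul, eval_C,
    eval_preHilbertPoly_add, hzero] at hn
  linarith

lemma factorial_mul_leadingCoeff_of_eventually_eval_eq {F : Type*} [Field F] [CharZero F] {t : ℕ}
    {P : F[X]} {l : F} (h : ∀ᶠ n : ℕ in atTop, P.eval (n : F) = (n + t).choose t * l) :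
    (t ! : F) * P.leadingCoeff = l := by
  obtain ⟨N, hN⟩ := eventually_atTop.1 h
  have hP : P = C l * preHilbertPoly F t 0 := by
    refine eq_of_infinite_eval_eq _ _ <|
      ((Set.Ici_infinite N).image Nat.cast_injective.injOn).mono ?_
    rintro _ ⟨n, hn, rfl⟩
    simp [hN n hn, preHilbertPoly_eq_choose_sub_add F t n.zero_le, mul_comm]
  rw [hP, leadingCoeff_mul, leadingCoeff_C, leadingCoeff_preHilbertPoly, mul_left_comm,
    mul_inv_cancel₀ (Nat.cast_ne_zero.2 t.factorial_ne_zero), mul_one]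

/-- The `ℕ∞`-valued function `u` is, for large arguments, finite and given by the polynomial `G`. -/
def AgreesEventually (u : ℕ → ℕ∞) (G : ℚ[X]) : Prop :=
  ∀ᶠ n : ℕ in atTop, ∃ len : ℕ, u n = len ∧ (len : ℚ) = G.eval (n : ℚ)

end HilbertPolynomials

section ColonGrowth

open Filter Polynomial
open Finset.Nat (antidiagonalTuple mem_antidiagonalTuple)
open scoped Nat

variable {R M : Type*} [CommRing R] [AddCommGroup M] [Module R M] {t : ℕ} {I : Ideal R}

/-- With `Q = seqIdeal x`: for every `d` there is a degree `n` such that the length of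
`((Q ^ (n + d + 1) M : I) ⊓ Q ^ (n + d) M) / Q ^ (n + d + 1) M` falls short of its upper bound, the
number of monomials of degree `n + d` times the length of `M / Q M`, by less than the number of
monomials of degree `n`. -/
def HasMaximalColonGrowth (x : Fin t → R) (I : Ideal R) (M : Type*) [AddCommGroup M]
    [Module R M] : Prop :=
  ∀ d, ∃ n, (antidiagonalTuple t (n + d)).card *
      Module.length R (M ⧸ seqIdeal x • (⊤ : Submodule R M)) <
    relLength ((seqIdeal x ^ (n + d + 1) • ⊤ : Submodule R M).colonBy I ⊓
      seqIdeal x ^ (n + d) • ⊤) (seqIdeal x ^ (n + d + 1) • ⊤) + (antidiagonalTuple t n).card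

lemma HasMaximalColonGrowth.smul_top_le {x : Fin t → R} (h : HasMaximalColonGrowth x I M)
    (hfin : Module.length R (M ⧸ seqIdeal x • (⊤ : Submodule R M)) ≠ ⊤) :
    I • (⊤ : Submodule R M) ≤ seqIdeal x • ⊤ := by
  obtain ⟨n, hn⟩ := h 0
  exact smul_top_le_of_card_mul_lt hfin le_rfl hn

lemma HasMaximalColonGrowth.leadingColon_le {x : Fin t → R} (h : HasMaximalColonGrowth x I M)
    (hfin : Module.length R (M ⧸ seqIdeal x • (⊤ : Submodule R M)) ≠ ⊤) (α : Fin t → ℕ) :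
    leadingColon x M α ≤ seqIdeal x • ⊤ := by
  obtain ⟨n, hn⟩ := h (∑ i, α i)
  exact leadingColon_le_of_card_mul_lt hfin (mem_antidiagonalTuple.2 rfl) hn

lemma hasMaximalColonGrowth_of_agreesEventually [IsNoetherianRing R] [Module.Finite R M]
    {s l : ℕ} {x : Fin (s + 1) → R} {G : ℚ[X]} (hs : s ≠ 0) (hI : seqIdeal x ≤ I)
    (hl : Module.length R (M ⧸ seqIdeal x • (⊤ : Submodule R M)) = l) (hdeg : G.natDegree ≤ s)
    (hlead : (s ! : ℚ) * G.coeff s = l)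
    (hG : AgreesEventually (fun n ↦ relLength ((seqIdeal x ^ (n + 1) • ⊤ :
      Submodule R M).colonBy I) (seqIdeal x ^ (n + 1) • ⊤)) G) :
    HasMaximalColonGrowth x I M := by
  intro d
  obtain ⟨k, c, hk⟩ := exists_relLength_le_relLength_inf_pow_add
    (hl.trans_ne (ENat.natCast_ne_top l))
  obtain ⟨n, hn, ⟨len, hlen, hlenG⟩, hnk⟩ :=
    ((eventually_multichoose_mul_add_lt hs hdeg hlead c d).and
      ((tendsto_add_atTop_nat d).eventually (hG.and (eventually_ge_atTop k)))).exists
  refine ⟨n, lt_of_not_ge fun hle ↦ hn.not_ge ?_⟩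
  rw [card_antidiagonalTuple, card_antidiagonalTuple, hl] at hle
  have hcolon := hk (n + d) hnk _ (colonBy_anti hI _)
  have hbound : (len + (s + 1).multichoose n : ℕ∞) ≤ (s + 1).multichoose (n + d) * l + c := by
    rw [← hlen]
    refine (add_le_add_left hcolon _).trans ?_
    rw [add_right_comm]
    exact add_le_add_left hle _
  rw [← hlenG]
  exact_mod_cast hbound

end ColonGrowth

section Invariants

variable {R M : Type*} [CommRing R] [AddCommGroup M] [Module R M] {t : ℕ}

lemma moduleLength_eq_length : moduleLength R M = Module.length R M :=
  (Module.length_eq_height R M).symm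

lemma muGen_eq_spanFinrank [Module.Finite R M] :
    muGen R M = (⊤ : Submodule R M).spanFinrank := by
  have hmem := (Module.Finite.fg_top (R := R) (M := M)).exists_span_finset_card_eq_spanFinrank
  refine le_antisymm (Nat.sInf_le hmem) (le_csInf ⟨_, hmem⟩ ?_)
  rintro _ ⟨s, rfl, hs⟩
  rw [← hs, ← Set.ncard_coe_finset]
  exact spanFinrank_span_le_ncard_of_finite s.finite_toSet

lemma length_quotient_maximalIdeal_smul_top [IsLocalRing R] [Module.Finite R M] :
    Module.length R (M ⧸ maximalIdeal R • (⊤ : Submodule R M)) = muGen R M := by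
  let : Field (R ⧸ maximalIdeal R) := Ideal.Quotient.field _
  have e : ((⊤ : Submodule R M) ⧸ maximalIdeal R • (⊤ : Submodule R (⊤ : Submodule R M))) ≃ₗ[R]
      (M ⧸ maximalIdeal R • (⊤ : Submodule R M)) :=
    Quotient.equiv _ _ topEquiv (by simp [Submodule.map_smul''])
  have : Module.Finite (R ⧸ maximalIdeal R)
      ((⊤ : Submodule R M) ⧸ maximalIdeal R • (⊤ : Submodule R (⊤ : Submodule R M))) :=
    Module.Finite.of_restrictScalars_finite R _ _
  rw [muGen_eq_spanFinrank, IsLocalRing.spanFinrank_eq_finrank_quotient _ Module.Finite.fg_top,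
    ← e.length_eq, Module.length_eq_of_surjective (S := R) (R := R ⧸ maximalIdeal R)
      Ideal.Quotient.mk_surjective, Module.length_eq_finrank]

lemma pow_smul_top_congr {I J : Ideal R} (h : I • (⊤ : Submodule R M) = J • ⊤) (n : ℕ) :
    I ^ n • (⊤ : Submodule R M) = J ^ n • ⊤ := by
  induction n with
  | zero => simp
  | succ n ih =>
    rw [pow_succ, Submodule.mul_smul, h, ← Submodule.mul_smul, mul_comm, Submodule.mul_smul, ih,
      ← Submodule.mul_smul, pow_succ']

lemma length_quotient_pow_smul_top_congr {I J : Ideal R} (h : I • (⊤ : Submodule R M) = J • ⊤)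
    (n : ℕ) : Module.length R (M ⧸ I ^ n • (⊤ : Submodule R M)) =
      Module.length R (M ⧸ J ^ n • (⊤ : Submodule R M)) := by
  rw [pow_smul_top_congr h]

lemma exists_span_eq_seqIdeal {S : Finset R} (hS : S.card = t) :
    ∃ x : Fin t → R, Ideal.span (S : Set R) = seqIdeal x := by
  refine ⟨fun i ↦ (S.equivFinOfCardEq hS).symm i, ?_⟩
  rw [seqIdeal, ← Function.comp_def Subtype.val, EquivLike.range_comp, Subtype.range_coe]

lemma length_quotient_seqIdeal_pow_succ {x : Fin t → R}
    (h : ∀ α, leadingColon x M α ≤ seqIdeal x • ⊤) (n : ℕ) :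
    Module.length R (M ⧸ seqIdeal x ^ (n + 1) • (⊤ : Submodule R M)) =
      (n + t).choose t * Module.length R (M ⧸ seqIdeal x • (⊤ : Submodule R M)) := by
  have hcolon (α : Fin t → ℕ) : Module.length R (M ⧸ leadingColon x M α) =
      Module.length R (M ⧸ seqIdeal x • (⊤ : Submodule R M)) := by
    rw [(h α).antisymm (seqIdeal_smul_top_le_leadingColon x α)]
  rw [← Nat.sum_range_multichoose, ← relLength_top]
  suffices hsum : ∀ k, relLength ⊤ (seqIdeal x ^ k • (⊤ : Submodule R M)) =
      (∑ j ∈ Finset.range k, t.multichoose j : ℕ) *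
        Module.length R (M ⧸ seqIdeal x • (⊤ : Submodule R M)) from hsum (n + 1)
  intro k
  induction k with
  | zero => simp [relLength_eq_zero_iff.2]
  | succ k ih =>
    rw [relLength_eq_add (pow_succ_smul_top_le _ k), top_inf_eq, relLength_seqIdeal_pow_smul_top,
      ih, Finset.sum_range_succ]
    simp only [hcolon, Finset.sum_const, card_antidiagonalTuple, nsmul_eq_mul, Nat.cast_add]
    rw [add_mul, add_comm]

lemma length_le_of_isRegular [IsNoetherianRing R] [IsLocalRing R] [Module.Finite R M]
    (hdim : ringKrullDim (R ⧸ Module.annihilator R M) = t) {rs : List R}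
    (hreg : RingTheory.Sequence.IsRegular M rs) : rs.length ≤ t := by
  have hadd := Module.supportDim_add_length_eq_supportDim_of_isRegular rs hreg
  rw [Module.supportDim_eq_ringKrullDim_quotient_annihilator R M, hdim] at hadd
  have : Nontrivial (M ⧸ Ideal.ofList rs • (⊤ : Submodule R M)) :=
    hreg.quot_ofList_smul_nontrivial ⊤
  have : Nonempty (Module.support R (M ⧸ Ideal.ofList rs • (⊤ : Submodule R M))) :=
    Module.nonempty_support_of_nontrivial.to_subtype
  have hnonneg : 0 ≤ Module.supportDim R (M ⧸ Ideal.ofList rs • (⊤ : Submodule R M)) :=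
    Order.krullDim_nonneg
  exact_mod_cast hadd ▸ le_add_of_nonneg_left hnonneg

lemma depthM_eq_length_of_isRegular [IsNoetherianRing R] [IsLocalRing R] [Module.Finite R M]
    (hdim : ringKrullDim (R ⧸ Module.annihilator R M) = t) {rs : List R}
    (hmem : ∀ r ∈ rs, r ∈ maximalIdeal R) (hreg : RingTheory.Sequence.IsRegular M rs)
    (hlength : rs.length = t) : depthM R M = t := by
  refine IsGreatest.csSup_eq ⟨⟨rs, hlength, hmem, hreg⟩, ?_⟩
  rintro _ ⟨_, rfl, -, hreg'⟩
  exact length_le_of_isRegular hdim hreg'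

lemma IsQuasiRegular.depthM_eq [IsNoetherianRing R] [IsLocalRing R] [Module.Finite R M]
    {x : Fin t → R} (h : IsQuasiRegular x M) (hx : seqIdeal x ≤ maximalIdeal R)
    (hdim : ringKrullDim (R ⧸ Module.annihilator R M) = t) : depthM R M = t := by
  have : Nontrivial M := by
    rw [← Module.supportDim_ne_bot_iff_nontrivial R,
      Module.supportDim_eq_ringKrullDim_quotient_annihilator, hdim]
    exact WithBot.coe_ne_bot
  have hmem : ∀ r ∈ List.ofFn x, r ∈ maximalIdeal R :=
    List.forall_mem_ofFn_iff.2 fun i ↦ hx (mem_seqIdeal x i)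
  exact depthM_eq_length_of_isRegular hdim hmem
    ((isRegular_iff_isWeaklyRegular_of_subset_maximalIdeal hmem).2 (h.isWeaklyRegular hx))
    List.length_ofFn

lemma factorial_mul_leadingCoeff_eq_length {x : Fin t → R} {l : ℕ}
    (hl : Module.length R (M ⧸ seqIdeal x • (⊤ : Submodule R M)) = l)
    (h : ∀ α, leadingColon x M α ≤ seqIdeal x • ⊤) {P : Polynomial ℚ}
    (hP : AgreesEventually
      (fun n ↦ Module.length R (M ⧸ seqIdeal x ^ (n + 1) • (⊤ : Submodule R M))) P) :
    (t.factorial : ℚ) * P.leadingCoeff = l := by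
  refine factorial_mul_leadingCoeff_of_eventually_eval_eq (hP.mono ?_)
  rintro n ⟨len, hlen, hlenP⟩
  simp only [length_quotient_seqIdeal_pow_succ h, hl] at hlen
  rw [← hlenP]
  exact_mod_cast hlen.symm

end Invariants

/-- If `dim M = t ≥ 2` and `f⁰_Q(M) = ℓ_R(M/QM)` for some parameter ideal `Q`,
then `M` is Cohen–Macaulay with `𝔪M = QM`; in particular `M` is an Ulrich module. -/
theorem statement9 {R M : Type*} [CommRing R] [IsNoetherianRing R] [IsLocalRing R]
    [AddCommGroup M] [Module R M] [Module.Finite R M]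
    (t : ℕ) (ht : 2 ≤ t)
    (hdim : ringKrullDim (R ⧸ Module.annihilator R M) = t)
    (Q : Ideal R) (hQpar : IsParameterIdeal R M t Q)
    (G : Polynomial ℚ) (hGdeg : G.natDegree = t - 1)
    (hG : ∃ N : ℕ, ∀ n ≥ N, ∃ len : ℕ,
      moduleLength R ↥(Submodule.map (Q ^ (n + 1) • ⊤ : Submodule R M).mkQ
        ((Q ^ (n + 1) • ⊤ : Submodule R M).colonBy (maximalIdeal R))) = len ∧
        (len : ℚ) = G.eval (n : ℚ))
    (hf : ∃ l : ℕ, moduleLength R (M ⧸ (Q • ⊤ : Submodule R M)) = l ∧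
      ((t - 1).factorial : ℚ) * G.leadingCoeff = (l : ℚ)) :
    depthM R M = t ∧
    (maximalIdeal R) • (⊤ : Submodule R M) = Q • ⊤ ∧
    ∀ P : Polynomial ℚ, P.natDegree = t →
      (∃ N : ℕ, ∀ n ≥ N, ∃ len : ℕ,
        moduleLength R (M ⧸ ((maximalIdeal R) ^ (n + 1) • ⊤ : Submodule R M)) = len ∧
          (len : ℚ) = P.eval (n : ℚ)) →
      (muGen R M : ℚ) = (t.factorial : ℚ) * P.leadingCoeff := by
  obtain ⟨hQm, S, hS, hQS, -⟩ := hQpar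
  obtain ⟨l, hl, hlead⟩ := hf
  obtain ⟨s, rfl⟩ := Nat.exists_eq_add_of_le' (one_le_two.trans ht)
  obtain ⟨x, rfl⟩ : ∃ x : Fin (s + 1) → R, Q = seqIdeal x := hQS ▸ exists_span_eq_seqIdeal hS
  simp only [moduleLength_eq_length, Nat.add_sub_cancel] at hl hlead hGdeg hG ⊢
  have hfin := hl.trans_ne (ENat.natCast_ne_top l)
  have hgrowth : HasMaximalColonGrowth x (maximalIdeal R) M :=
    hasMaximalColonGrowth_of_agreesEventually (by lia) hQm hl hGdeg.le
      (by rwa [← hGdeg] at hlead ⊢) (Filter.eventually_atTop.2 hG)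
  have hcolon := hgrowth.leadingColon_le hfin
  have hmax : maximalIdeal R • (⊤ : Submodule R M) = seqIdeal x • ⊤ :=
    (hgrowth.smul_top_le hfin).antisymm (smul_mono_left hQm)
  refine ⟨(isQuasiRegular_of_leadingColon_le hcolon).depthM_eq hQm hdim, hmax, fun P _ hP ↦ ?_⟩
  have hmu : muGen R M = l := by
    exact_mod_cast length_quotient_maximalIdeal_smul_top.symm.trans (hmax ▸ hl)
  simp only [length_quotient_pow_smul_top_congr hmax] at hP
  rw [hmu, factorial_mul_leadingCoeff_eq_length hl hcolon (Filter.eventually_atTop.2 hP)]
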